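/- arXiv:1609.00922 — 2 statements merged into one kernel-verified Lean document; each statement's English description precedes it below -/
import Mathlib

section
/- Let E be a measurable space, m a σ-finite measure on E, and r : E × E → [0,∞] a measurable function with r(x,y) = r(y,x) for all x,y ∈ E. For a measure λ on E write Rλ(x) = ∫_E r(x,y) λ(dy), and for measurable g : E → [0,∞] write Rg(x) = ∫_E r(x,y) g(y) m(dy). Assume there exists a sequence of measurable functions g_n : E → [0,∞], n ∈ ℕ, such that for every x ∈ E the sequence n ↦ Rg_n(x) is nondecreasing, Rg_n(x) ≤ 1 for all n and x, and Rg_n(x) → 1 as n → ∞ for every x ∈ E. Let μ be a finite measure on E and let ν be a σ-finite measure on E such that Rν(x) ≤ Rμ(x) for m-almost every x ∈ E. Then ν(E) ≤ μ(E); in particular ν is a finite measure. -/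
open MeasureTheory

/-! By Tonelli, integrating the potential of a measure `ρ` against `ν` is the same as integrating
the dual potential of `ν` against `ρ`. So when the dual potential of `ν` is dominated by that of
`μ`, every potential has a smaller integral against `ν` than against `μ`. Potentials bounded by `1`
and converging to `1` then compare the total masses, through Fatou's lemma on the side of `ν`. -/

section Potential

variable {E F : Type*} [MeasurableSpace F] {r : E → F → ENNReal}

/-- The potential `Rρ(x) = ∫ r(x,y) ρ(dy)` of a measure `ρ` with respect to a kernel `r`. The
potential of a function `g` with respect to a reference measure `m` is that of `m.withDensity g`,
and the potential for the dual (transposed) kernel is written with `flip r`. -/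
noncomputable def potential (r : E → F → ENNReal) (ρ : Measure F) (x : E) : ENNReal :=
  ∫⁻ y, r x y ∂ρ

theorem potential_withDensity {m : Measure F} {x : E} (hrx : AEMeasurable (r x) m) {g : F → ENNReal}
    (hg : AEMeasurable g m) :
    potential r (m.withDensity g) x = ∫⁻ y, r x y * g y ∂m := by
  simp only [potential, lintegral_withDensity_eq_lintegral_mul₀ hg hrx, Pi.mul_apply, mul_comm]

variable [MeasurableSpace E]

theorem measurable_potential (hr : Measurable (Function.uncurry r)) (ρ : Measure F) [SFinite ρ] :
    Measurable (potential r ρ) :=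
  hr.lintegral_prod_right

theorem lintegral_potential_eq_lintegral_potential_flip (hr : Measurable (Function.uncurry r))
    (κ : Measure E) [SFinite κ] (ρ : Measure F) [SFinite ρ] :
    ∫⁻ x, potential r ρ x ∂κ = ∫⁻ y, potential (flip r) κ y ∂ρ :=
  lintegral_lintegral_swap hr.aemeasurable

theorem lintegral_potential_le_of_potential_flip_le (hr : Measurable (Function.uncurry r))
    {μ ν : Measure E} [SFinite μ] [SFinite ν] {ρ : Measure F} [SFinite ρ]
    (hdom : potential (flip r) ν ≤ᵐ[ρ] potential (flip r) μ) :
    ∫⁻ x, potential r ρ x ∂ν ≤ ∫⁻ x, potential r ρ x ∂μ := by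
  simpa only [lintegral_potential_eq_lintegral_potential_flip hr] using lintegral_mono_ae hdom

theorem comparison_of_potentials_measure_general (hr : Measurable (Function.uncurry r))
    {μ ν : Measure E} [SFinite μ] [SFinite ν] {ι : Type*} {u : Filter ι} [u.NeBot]
    [u.IsCountablyGenerated] {ρ : ι → Measure F} [∀ i, SFinite (ρ i)]
    (hle : ∀ i, potential r (ρ i) ≤ᵐ[μ] 1)
    (hliminf : ∀ᵐ x ∂ν, 1 ≤ Filter.liminf (fun i => potential r (ρ i) x) u)
    (hdom : ∀ i, potential (flip r) ν ≤ᵐ[ρ i] potential (flip r) μ) :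
    ν Set.univ ≤ μ Set.univ := by
  have hbound (i : ι) : ∫⁻ x, potential r (ρ i) x ∂ν ≤ μ Set.univ :=
    calc ∫⁻ x, potential r (ρ i) x ∂ν
        ≤ ∫⁻ x, potential r (ρ i) x ∂μ := lintegral_potential_le_of_potential_flip_le hr (hdom i)
      _ ≤ ∫⁻ _, 1 ∂μ := lintegral_mono_ae (hle i)
      _ = μ Set.univ := lintegral_one
  calc ν Set.univ
      = ∫⁻ _, 1 ∂ν := lintegral_one.symm
    _ ≤ ∫⁻ x, Filter.liminf (fun i => potential r (ρ i) x) u ∂ν := lintegral_mono_ae hliminf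
    _ ≤ Filter.liminf (fun i => ∫⁻ x, potential r (ρ i) x ∂ν) u :=
        lintegral_liminf_le fun i => measurable_potential hr (ρ i)
    _ ≤ μ Set.univ := Filter.liminf_le_of_frequently_le' (.of_forall hbound)

end Potential

/-- Comparison lemma (Lemma 4.2 of the paper): let `r : E × E → [0,∞]` be a
symmetric measurable kernel, and suppose there is a sequence of measurable
functions `g n : E → [0,∞]` whose potentials `Rg_n(x) = ∫ r(x,y) g_n(y) m(dy)`
are nondecreasing in `n`, bounded by `1`, and converge to `1` at every `x`.
If `μ` is a finite measure, `ν` is σ-finite, and the potential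
`Rν(x) = ∫ r(x,y) ν(dy)` is dominated by `Rμ(x)` for `m`-a.e. `x`, then
`ν(E) ≤ μ(E)`; in particular `ν` is a finite measure. -/
theorem comparison_of_potentials_measure
    {E : Type*} [MeasurableSpace E]
    (m : Measure E) [SigmaFinite m]
    (r : E → E → ENNReal)
    (hr : Measurable (Function.uncurry r))
    (hsymm : ∀ x y, r x y = r y x)
    (g : ℕ → E → ENNReal) (hg : ∀ n, Measurable (g n))
    (hmono : ∀ x, Monotone fun n => ∫⁻ y, r x y * g n y ∂m)
    (hle : ∀ n x, (∫⁻ y, r x y * g n y ∂m) ≤ 1)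
    (hlim : ∀ x, Filter.Tendsto (fun n => ∫⁻ y, r x y * g n y ∂m)
      Filter.atTop (nhds 1))
    (μ : Measure E) [IsFiniteMeasure μ]
    (ν : Measure E) [SigmaFinite ν]
    (hdom : ∀ᵐ x ∂m, (∫⁻ y, r x y ∂ν) ≤ ∫⁻ y, r x y ∂μ) :
    ν Set.univ ≤ μ Set.univ := by
  have hflip : flip r = r := funext₂ fun x y => hsymm y x
  have hdom_flip : potential (flip r) ν ≤ᵐ[m] potential (flip r) μ := by rwa [hflip]
  simp only [← potential_withDensity hr.of_uncurry_left.aemeasurable (hg _).aemeasurable]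
    at hle hlim
  exact comparison_of_potentials_measure_general hr (fun n => ae_of_all μ (hle n))
    (ae_of_all ν fun x => (hlim x).liminf_eq.ge)
    fun n => (withDensity_absolutelyContinuous m (g n)).ae_le hdom_flip
end

section
/- Let E be a measurable space, m a σ-finite measure on E, and r : E × E → [0,∞] a measurable function with r(x,y) = r(y,x) for all x,y ∈ E. For a measure λ on E write Rλ(x) = ∫_E r(x,y) λ(dy), and for measurable g : E → [0,∞] write Rg(x) = ∫_E r(x,y) g(y) m(dy). Assume there exists a sequence of measurable functions g_n : E → [0,∞], n ∈ ℕ, such that for every x ∈ E the sequence n ↦ Rg_n(x) is nondecreasing, Rg_n(x) ≤ 1 for all n and x, and Rg_n(x) → 1 as n → ∞ for every x ∈ E. Let μ be a finite measure on E and let h : E → [0,∞] be measurable with ∫_E r(x,y) h(y) m(dy) ≤ Rμ(x) for m-almost every x ∈ E. Then ∫_E h dm ≤ μ(E); in particular h belongs to L¹(E;m). -/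
open MeasureTheory

/-!
For measures `ν` and `μ`, Tonelli's theorem turns `∫ Rg dν` into `∫ (∫ r(x,y) ν(dx)) g(y) m(dy)`,
so a domination of the potential of `ν` by that of `μ` passes to `∫ Rg dν ≤ ∫ Rg dμ` for every
`g ≥ 0`. With `g = g_n` the right-hand side is at most `μ(E)` because `Rg_n ≤ 1`, and since
`Rg_n → 1`, Fatou's lemma bounds `ν(E)` by the lower limit of the left-hand sides. The choice
`ν = h·m` gives the theorem, symmetry of `r` identifying `∫ r(x,y) ν(dx)` with `Rh(y)`.
-/

section Kernel

variable {X Y : Type*} [MeasurableSpace X] [MeasurableSpace Y] {m : Measure Y} [SFinite m]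
  {r : X → Y → ENNReal}

theorem lintegral_lintegral_kernel_mul (hr : Measurable (Function.uncurry r))
    (ν : Measure X) [SFinite ν] {g : Y → ENNReal} (hg : AEMeasurable g m) :
    ∫⁻ x, ∫⁻ y, r x y * g y ∂m ∂ν = ∫⁻ y, (∫⁻ x, r x y ∂ν) * g y ∂m := by
  rw [lintegral_lintegral_swap (hr.aemeasurable.mul hg.comp_snd)]
  exact lintegral_congr fun y => lintegral_mul_const _ hr.of_uncurry_right

theorem lintegral_lintegral_kernel_mul_mono (hr : Measurable (Function.uncurry r))
    {ν μ : Measure X} [SFinite ν] [SFinite μ] {g : Y → ENNReal} (hg : AEMeasurable g m)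
    (hdom : ∀ᵐ y ∂m, ∫⁻ x, r x y ∂ν ≤ ∫⁻ x, r x y ∂μ) :
    ∫⁻ x, ∫⁻ y, r x y * g y ∂m ∂ν ≤ ∫⁻ x, ∫⁻ y, r x y * g y ∂m ∂μ := by
  rw [lintegral_lintegral_kernel_mul hr ν hg, lintegral_lintegral_kernel_mul hr μ hg]
  exact lintegral_mono_ae (hdom.mono fun y hy => by gcongr)

theorem comparison_of_potentials_function_general (hr : Measurable (Function.uncurry r))
    {ν μ : Measure X} [SFinite ν] [SFinite μ]
    {g : ℕ → Y → ENNReal} (hg : ∀ n, AEMeasurable (g n) m)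
    (hle : ∀ n, ∀ᵐ x ∂μ, ∫⁻ y, r x y * g n y ∂m ≤ 1)
    (hlim : ∀ᵐ x ∂ν, 1 ≤ Filter.liminf (fun n => ∫⁻ y, r x y * g n y ∂m) Filter.atTop)
    (hdom : ∀ᵐ y ∂m, ∫⁻ x, r x y ∂ν ≤ ∫⁻ x, r x y ∂μ) :
    ν Set.univ ≤ μ Set.univ := by
  have hpot (n : ℕ) : AEMeasurable (fun x => ∫⁻ y, r x y * g n y ∂m) ν :=
    (hr.aemeasurable.mul (hg n).comp_snd).lintegral_prod_right'
  have hbound (n : ℕ) : ∫⁻ x, ∫⁻ y, r x y * g n y ∂m ∂ν ≤ μ Set.univ :=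
    calc ∫⁻ x, ∫⁻ y, r x y * g n y ∂m ∂ν
        ≤ ∫⁻ x, ∫⁻ y, r x y * g n y ∂m ∂μ :=
          lintegral_lintegral_kernel_mul_mono hr (hg n) hdom
      _ ≤ ∫⁻ _, 1 ∂μ := lintegral_mono_ae (hle n)
      _ = μ Set.univ := lintegral_one
  calc ν Set.univ = ∫⁻ _, 1 ∂ν := lintegral_one.symm
    _ ≤ ∫⁻ x, Filter.liminf (fun n => ∫⁻ y, r x y * g n y ∂m) Filter.atTop ∂ν :=
        lintegral_mono_ae hlim
    _ ≤ Filter.liminf (fun n => ∫⁻ x, ∫⁻ y, r x y * g n y ∂m ∂ν) Filter.atTop :=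
        lintegral_liminf_le' hpot
    _ ≤ μ Set.univ :=
        Filter.liminf_le_of_frequently_le' (Filter.Frequently.of_forall hbound)

end Kernel

/-- Special case `ν = h·m` of the comparison lemma (Lemma 4.2 of the paper):
let `r : E × E → [0,∞]` be a symmetric measurable kernel and suppose there is a
sequence of measurable `g n : E → [0,∞]` whose potentials
`Rg_n(x) = ∫ r(x,y) g_n(y) m(dy)` are nondecreasing in `n`, bounded by `1`, and
converge to `1` at every `x`. If `μ` is a finite measure and `h : E → [0,∞]`
is measurable with `∫ r(x,y) h(y) m(dy) ≤ Rμ(x)` for `m`-a.e. `x`, then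
`∫ h dm ≤ μ(E)`; in particular `h ∈ L¹(E;m)`. -/
theorem comparison_of_potentials_function
    {E : Type*} [MeasurableSpace E]
    (m : Measure E) [SigmaFinite m]
    (r : E → E → ENNReal)
    (hr : Measurable (Function.uncurry r))
    (hsymm : ∀ x y, r x y = r y x)
    (g : ℕ → E → ENNReal) (hg : ∀ n, Measurable (g n))
    (hmono : ∀ x, Monotone fun n => ∫⁻ y, r x y * g n y ∂m)
    (hle : ∀ n x, (∫⁻ y, r x y * g n y ∂m) ≤ 1)
    (hlim : ∀ x, Filter.Tendsto (fun n => ∫⁻ y, r x y * g n y ∂m)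
      Filter.atTop (nhds 1))
    (μ : Measure E) [IsFiniteMeasure μ]
    (h : E → ENNReal) (hh : Measurable h)
    (hdom : ∀ᵐ x ∂m, (∫⁻ y, r x y * h y ∂m) ≤ ∫⁻ y, r x y ∂μ) :
    ∫⁻ x, h x ∂m ≤ μ Set.univ := by
  have hdom' : ∀ᵐ y ∂m, ∫⁻ x, r x y ∂(m.withDensity h) ≤ ∫⁻ x, r x y ∂μ :=
    hdom.mono fun y hy => by
      simpa only [hsymm _ y, lintegral_withDensity_eq_lintegral_mul m hh hr.of_uncurry_left,
        Pi.mul_apply, mul_comm (h _)] using hy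
  simpa only [withDensity_apply _ MeasurableSet.univ, Measure.restrict_univ] using
    comparison_of_potentials_function_general hr (fun n => (hg n).aemeasurable)
      (fun n => ae_of_all μ (hle n)) (ae_of_all _ fun x => (hlim x).liminf_eq.ge) hdom'
end
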